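/- Let X be any graph on n vertices with minimum degree δ ≥ 1 and let μ be the greatest eigenvalue of its Laplacian matrix. Then every independent set S satisfies |S| ≤ n·(μ − δ)/μ. -/

import Mathlib

open Matrix Finset

/-!
The Rayleigh quotient of a symmetric matrix is at most its greatest eigenvalue. For the Laplacian,
whose kernel contains `1`, applying this to the component of the indicator vector of `S` orthogonal
to `1` bounds the weight of the edges leaving `S` by `μ |S| |Sᶜ| / n`. When `S` is independent
every edge meeting `S` leaves it, so that weight is the degree sum of `S`, which is at least
`|S| δ`. A single vertex is independent, and applying the bound to it shows `μ > 0`.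
-/

open scoped MatrixOrder

variable {V : Type*} [Fintype V]

section Indicator

variable {R : Type*} [NonAssocSemiring R]

theorem indicator_one_dotProduct (S : Finset V) (x : V → R) :
    (S : Set V).indicator 1 ⬝ᵥ x = ∑ i ∈ S, x i := by
  classical
  simp [dotProduct, Set.indicator_apply]

theorem indicator_one_dotProduct_self (S : Finset V) :
    (S : Set V).indicator (1 : V → R) ⬝ᵥ (S : Set V).indicator 1 = #S := by
  classical
  simp [indicator_one_dotProduct, Set.indicator_apply]

theorem mulVec_indicator_one_apply (M : Matrix V V R) (S : Finset V) (i : V) :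
    (M *ᵥ (S : Set V).indicator 1) i = ∑ j ∈ S, M i j := by
  classical
  simp [mulVec, dotProduct, Set.indicator_apply]

end Indicator

variable [DecidableEq V]

theorem exists_mulVec_eq_smul_of_mem_spectrum {K : Type*} [Field K] {M : Matrix V V K} {ν : K}
    (hν : ν ∈ spectrum K M) : ∃ v : V → K, v ≠ 0 ∧ M *ᵥ v = ν • v := by
  rw [← spectrum_toLin'] at hν
  obtain ⟨v, hv⟩ := (Module.End.HasEigenvalue.of_mem_spectrum hν).exists_hasEigenvector
  exact ⟨v, hv.2, by simpa using hv.apply_eq_smul⟩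

section Rayleigh

variable {M : Matrix V V ℝ} {μ : ℝ}

theorem le_algebraMap_of_forall_eigenvalue_le (hM : M.IsSymm)
    (hμ : ∀ (ν : ℝ) (v : V → ℝ), v ≠ 0 → M *ᵥ v = ν • v → ν ≤ μ) : M ≤ algebraMap ℝ _ μ := by
  refine le_algebraMap_of_spectrum_le (fun ν hν => ?_) hM
  obtain ⟨v, hv0, hv⟩ := exists_mulVec_eq_smul_of_mem_spectrum hν
  exact hμ ν v hv0 hv

theorem dotProduct_mulVec_le_of_le_algebraMap (h : M ≤ algebraMap ℝ _ μ) (x : V → ℝ) :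
    x ⬝ᵥ M *ᵥ x ≤ μ * (x ⬝ᵥ x) := by
  simpa [Algebra.algebraMap_eq_smul_one, sub_mulVec, smul_mulVec, dotProduct_sub] using
    (le_iff.mp h).dotProduct_mulVec_nonneg x

theorem isSymm_of_le_algebraMap (h : M ≤ algebraMap ℝ _ μ) : M.IsSymm := by
  have hdiff : (algebraMap ℝ (Matrix V V ℝ) μ - M).IsSymm := (le_iff.mp h).isHermitian
  have hscalar : (algebraMap ℝ (Matrix V V ℝ) μ).IsSymm := isSymm_diagonal _
  simpa using hscalar.sub hdiff

theorem dotProduct_self_mul_dotProduct_mulVec_le_of_mulVec_eq_zero {y : V → ℝ}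
    (h : M ≤ algebraMap ℝ _ μ) (hy : M *ᵥ y = 0) (x : V → ℝ) :
    (y ⬝ᵥ y) * (x ⬝ᵥ M *ᵥ x) ≤ μ * ((y ⬝ᵥ y) * (x ⬝ᵥ x) - (x ⬝ᵥ y) ^ 2) := by
  rcases eq_or_ne y 0 with rfl | hy0
  · simp
  have hyMx : y ⬝ᵥ M *ᵥ x = 0 := by
    rw [dotProduct_mulVec, ← mulVec_transpose, isSymm_of_le_algebraMap h, hy, zero_dotProduct]
  have hyy : 0 < y ⬝ᵥ y := by simpa using dotProduct_star_self_pos_iff.mpr hy0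
  -- The vector below is `y ⬝ᵥ y` times the component of `x` orthogonal to `y`.
  have hproj := dotProduct_mulVec_le_of_le_algebraMap h ((y ⬝ᵥ y) • x - (x ⬝ᵥ y) • y)
  simp only [mulVec_sub, mulVec_smul, hy, smul_zero, sub_zero, sub_dotProduct, dotProduct_sub,
    smul_dotProduct, dotProduct_smul, hyMx, dotProduct_comm y x, smul_eq_mul, mul_zero] at hproj
  refine le_of_mul_le_mul_left ?_ hyy
  linarith

end Rayleigh

/-- The Laplacian `D - A` of the weighted graph with adjacency matrix `A`, where `D` is the diagonal
matrix of the row sums of `A`. Weights of either sign are allowed. -/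
def weightedLaplacian {R : Type*} [AddCommGroup R] (A : Matrix V V R) : Matrix V V R :=
  diagonal (fun i => ∑ j, A i j) - A

section Laplacian

theorem isSymm_weightedLaplacian {R : Type*} [AddCommGroup R] {A : Matrix V V R}
    (hA : A.IsSymm) : (weightedLaplacian A).IsSymm :=
  (isSymm_diagonal _).sub hA

theorem weightedLaplacian_mulVec_one {R : Type*} [Ring R] (A : Matrix V V R) :
    weightedLaplacian A *ᵥ 1 = 0 := by
  ext i
  rw [weightedLaplacian, sub_mulVec, Pi.sub_apply, mulVec_diagonal]
  simp [mulVec, dotProduct]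

theorem indicator_dotProduct_weightedLaplacian_mulVec {R : Type*} [Ring R] (A : Matrix V V R)
    (S : Finset V) :
    (S : Set V).indicator 1 ⬝ᵥ weightedLaplacian A *ᵥ (S : Set V).indicator 1 =
      ∑ i ∈ S, ∑ j ∈ Sᶜ, A i j := by
  rw [indicator_one_dotProduct]
  refine sum_congr rfl fun i hi => ?_
  rw [weightedLaplacian, sub_mulVec, Pi.sub_apply, mulVec_diagonal, mulVec_indicator_one_apply,
    Set.indicator_of_mem (mem_coe.mpr hi), Pi.one_apply, mul_one, sub_eq_iff_eq_add',
    sum_add_sum_compl]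

variable {A : Matrix V V ℝ} {μ : ℝ}

theorem card_mul_sum_sum_compl_le (h : weightedLaplacian A ≤ algebraMap ℝ _ μ) (S : Finset V) :
    Fintype.card V * ∑ i ∈ S, ∑ j ∈ Sᶜ, A i j ≤ μ * (#S * #Sᶜ) := by
  have hproj := dotProduct_self_mul_dotProduct_mulVec_le_of_mulVec_eq_zero h
    (weightedLaplacian_mulVec_one A) ((S : Set V).indicator 1)
  have hsum : (S : Set V).indicator 1 ⬝ᵥ (1 : V → ℝ) = #S := by simp [indicator_one_dotProduct]
  rw [indicator_dotProduct_weightedLaplacian_mulVec, one_dotProduct_one,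
    indicator_one_dotProduct_self, hsum] at hproj
  rw [card_compl, Nat.cast_sub (card_le_univ S)]
  linarith

theorem card_mul_le_mul_card_compl (h : weightedLaplacian A ≤ algebraMap ℝ _ μ) {S : Finset V}
    (hS : S.Nonempty) {δ : ℝ} (hδ : ∀ i ∈ S, δ ≤ ∑ j, A i j)
    (hind : ∀ i ∈ S, ∀ j ∈ S, A i j = 0) :
    Fintype.card V * δ ≤ μ * #Sᶜ := by
  have hdeg : #S * δ ≤ ∑ i ∈ S, ∑ j ∈ Sᶜ, A i j := by
    rw [← nsmul_eq_mul]
    refine card_nsmul_le_sum _ _ _ fun i hi => ?_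
    simpa [← sum_add_sum_compl S, sum_eq_zero (hind i hi)] using hδ i hi
  have hpos : (0 : ℝ) < #S := by exact_mod_cast hS.card_pos
  refine le_of_mul_le_mul_left ?_ hpos
  calc #S * (Fintype.card V * δ) = Fintype.card V * (#S * δ) := by ring
    _ ≤ Fintype.card V * ∑ i ∈ S, ∑ j ∈ Sᶜ, A i j := by gcongr
    _ ≤ μ * (#S * #Sᶜ) := card_mul_sum_sum_compl_le h S
    _ = #S * (μ * #Sᶜ) := by ring

theorem pos_of_weightedLaplacian_le (h : weightedLaplacian A ≤ algebraMap ℝ _ μ)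
    {i : V} (hloop : A i i = 0) (hi : 0 < ∑ j, A i j) : 0 < μ := by
  have : Nonempty V := ⟨i⟩
  have hsingle : Fintype.card V * ∑ j, A i j ≤ μ * #({i}ᶜ : Finset V) :=
    card_mul_le_mul_card_compl h (singleton_nonempty i) (by simp) (by simpa using hloop)
  refine pos_of_mul_pos_left (lt_of_lt_of_le ?_ hsingle) (Nat.cast_nonneg _)
  positivity

end Laplacian

theorem stmt5_general {A : Matrix V V ℝ} (hsym : A.IsSymm) (hloop : ∀ i, A i i = 0) {μ : ℝ}
    (hμ : ∀ (ν : ℝ) (v : V → ℝ), v ≠ 0 → weightedLaplacian A *ᵥ v = ν • v → ν ≤ μ)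
    {δ : ℝ} (hδ : 0 < δ) (hδmin : ∀ i, δ ≤ ∑ j, A i j)
    {S : Finset V} (hind : ∀ i ∈ S, ∀ j ∈ S, i ≠ j → A i j = 0) :
    (#S : ℝ) ≤ Fintype.card V * (μ - δ) / μ := by
  wlog hS : S.Nonempty generalizing S
  · rw [not_nonempty_iff_eq_empty.mp hS, card_empty, Nat.cast_zero]
    rcases isEmpty_or_nonempty V with _ | ⟨⟨i⟩⟩
    · simp
    · exact (Nat.cast_nonneg _).trans (this (S := {i}) (by simp) (singleton_nonempty i))
  have hle : weightedLaplacian A ≤ algebraMap ℝ _ μ :=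
    le_algebraMap_of_forall_eigenvalue_le (isSymm_weightedLaplacian hsym) hμ
  have hbound : Fintype.card V * δ ≤ μ * #Sᶜ :=
    card_mul_le_mul_card_compl hle hS (fun i _ => hδmin i) fun i hi j hj => by
      rcases eq_or_ne i j with rfl | hij
      exacts [hloop i, hind i hi j hj hij]
  obtain ⟨i, -⟩ := hS
  have hμpos : 0 < μ := pos_of_weightedLaplacian_le hle (hloop i) (hδ.trans_le (hδmin i))
  rw [card_compl, Nat.cast_sub (card_le_univ S)] at hbound
  rw [le_div_iff₀ hμpos]
  linarith

/-- Weakened Laplacian bound via the minimum degree `δ ≥ 1`: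
every independent set satisfies `|S| ≤ n (μ − δ)/μ`. -/
theorem stmt5 (n : ℕ) (hn : 0 < n)
    (A : Matrix (Fin n) (Fin n) ℝ) (hsym : A.IsSymm)
    (h01 : ∀ i j, A i j = 0 ∨ A i j = 1) (hloop : ∀ i, A i i = 0)
    (L : Matrix (Fin n) (Fin n) ℝ)
    (hL : L = Matrix.diagonal (fun i => ∑ j, A i j) - A)
    (μ : ℝ)
    (hμeig : ∃ v : Fin n → ℝ, v ≠ 0 ∧ L.mulVec v = μ • v)
    (hμmax : ∀ (ν : ℝ) (v : Fin n → ℝ), v ≠ 0 → L.mulVec v = ν • v → ν ≤ μ)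
    (δ : ℝ) (hδ1 : 1 ≤ δ)
    (hδmin : ∀ i, δ ≤ ∑ j, A i j) (hδex : ∃ i, ∑ j, A i j = δ)
    (S : Finset (Fin n)) (hind : ∀ i ∈ S, ∀ j ∈ S, i ≠ j → A i j = 0) :
    (S.card : ℝ) ≤ n * (μ - δ) / μ := by
  subst hL
  simpa using stmt5_general hsym hloop hμmax (one_pos.trans_le hδ1) hδmin hind
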